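/- arXiv:1703.06737 — 9 statements merged into one kernel-verified Lean document; each statement's English description precedes it below -/
import Mathlib

section
/- In the one-step setup of the Moving Center Lion Strategy, both coordinates of C − L' are strictly positive. -/
/-!
Write `d = L - M`, `e = M' - M`, so that `C = L + η d`, and let `N = ‖C - L‖ = η ‖d‖`.
Since `‖e‖ ≤ 1 < ‖e - d‖`, the man's move satisfies `2 ⟪d, e⟫ < ‖d‖²`. If some coordinate of `M'`
were at least that of `C`, then nonnegativity of the other coordinate of `M'` would give
`⟪d, e⟫ ≥ (η + 1) ‖d‖² - dⱼ Cⱼ` for that other index `j`; as `Cⱼ ≤ max (C 0) (C 1) = N`, we have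
`dⱼ Cⱼ ≤ ‖d‖ N = η ‖d‖²`, hence `⟪d, e⟫ ≥ ‖d‖²`, a contradiction. So `w = C - M'` has positive
coordinates (`coord_lt_center`).

It remains to see that `L' = C - s w` with `s > 0`. The parameters at which the line meets the unit
circle around `L` are the roots of a quadratic whose root sum is `2 ⟪C - L, w⟫ / ‖w‖² > 0`, so the
root of larger absolute value, which is the one selected by the lion, is positive.
-/

noncomputable section

abbrev Pt := EuclideanSpace ℝ (Fin 2)

/-- The positive quadrant: both coordinates nonnegative. -/
def inQ (P : Pt) : Prop := 0 ≤ P 0 ∧ 0 ≤ P 1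

/-- The larger of the two coordinates. -/
def maxCoord (P : Pt) : ℝ := max (P 0) (P 1)

/-- The smaller of the two coordinates. -/
def minCoord (P : Pt) : ℝ := min (P 0) (P 1)

/-- `C` is a center for `(L, M)`. -/
def IsCenter (C L M : Pt) : Prop :=
  inQ C ∧ (∃ η : ℝ, 0 < η ∧ C = L + η • (L - M)) ∧ ‖C - L‖ = maxCoord C

/-- One-step setup of the Moving Center Lion Strategy. -/
structure MCLSStep (L M C M' L' : Pt) : Prop where
  hLQ : inQ L
  hMQ : inQ M
  hLM0 : 0 < (L - M) 0
  hLM1 : 0 < (L - M) 1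
  hC : IsCenter C L M
  hM'Q : inQ M'
  hM'move : ‖M' - M‖ ≤ 1
  hM'far : 1 < ‖M' - L‖
  hline : ∃ s : ℝ, L' = C + s • (M' - C)
  hunit : ‖L' - L‖ = 1
  hfarthest : ∀ P : Pt, (∃ s : ℝ, P = C + s • (M' - C)) → ‖P - L‖ = 1 → ‖P - C‖ ≤ ‖L' - C‖

/-- The `i`-th coordinate of the man's new position is below that of the center; `j` is the other
index. Here `c`, `m`, `p` are the coordinates of `C`, `M`, `M'`, the vector `(di, dj)` is `L - M`,
and `N = ‖C - L‖`. -/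
lemma coord_lt_center {η N di dj mi mj ci cj pi pj : ℝ} (hη : 0 < η)
    (hdi : 0 < di) (hdj : 0 < dj)
    (hci : ci = mi + (η + 1) * di) (hcj : cj = mj + (η + 1) * dj)
    (hN0 : 0 ≤ N) (hN : N ^ 2 = η ^ 2 * (di ^ 2 + dj ^ 2)) (hcN : cj ≤ N) (hpj : 0 ≤ pj)
    (hmove : (pi - mi) ^ 2 + (pj - mj) ^ 2 ≤ 1)
    (hfar : 1 < (pi - mi - di) ^ 2 + (pj - mj - dj) ^ 2) : pi < ci := by
  by_contra! hle
  have hde : 2 * (di * (pi - mi) + dj * (pj - mj)) < di ^ 2 + dj ^ 2 := by nlinarith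
  have hdN : η * dj ≤ N := by
    apply le_of_sq_le_sq _ hN0
    nlinarith [sq_nonneg (η * di)]
  have hprod : dj * cj ≤ η * (di ^ 2 + dj ^ 2) := by
    have h1 : η * dj * cj ≤ η * dj * N := mul_le_mul_of_nonneg_left hcN (by positivity)
    have h2 : η * dj * N ≤ N * N := mul_le_mul_of_nonneg_right hdN hN0
    refine le_of_mul_le_mul_left ?_ hη
    nlinarith
  have h1 : di * ((η + 1) * di) ≤ di * (pi - mi) :=
    mul_le_mul_of_nonneg_left (by linarith) hdi.le
  have h2 : dj * ((η + 1) * dj - cj) ≤ dj * (pj - mj) :=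
    mul_le_mul_of_nonneg_left (by linarith) hdj.le
  nlinarith [pow_pos hdi 2, pow_pos hdj 2]

lemma norm_sq_pt (P : Pt) : ‖P‖ ^ 2 = P 0 ^ 2 + P 1 ^ 2 := by
  simp [EuclideanSpace.norm_sq_eq, Fin.sum_univ_two]

theorem stmt_1 (L M C M' L' : Pt) (h : MCLSStep L M C M' L') :
    0 < (C - L') 0 ∧ 0 < (C - L') 1 := by
  obtain ⟨-, -, hd0, hd1, ⟨-, ⟨η, hη, hCη⟩, hCmax⟩, ⟨hp0, hp1⟩, hmove, hfar, ⟨s, hs⟩, hunit,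
    hfarthest⟩ := h
  have hc0 : C 0 = L 0 + η * (L 0 - M 0) := by rw [hCη]; simp
  have hc1 : C 1 = L 1 + η * (L 1 - M 1) := by rw [hCη]; simp
  simp only [PiLp.sub_apply] at hd0 hd1
  have hN := norm_sq_pt (C - L)
  have hmove2 : ‖M' - M‖ ^ 2 ≤ 1 := pow_le_one₀ (norm_nonneg _) hmove
  have hfar2 : 1 < ‖M' - L‖ ^ 2 := one_lt_pow₀ hfar two_ne_zero
  rw [norm_sq_pt] at hmove2 hfar2
  simp only [PiLp.sub_apply] at hN hmove2 hfar2
  have hC0 : C 0 ≤ ‖C - L‖ := hCmax ▸ le_max_left _ _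
  have hC1 : C 1 ≤ ‖C - L‖ := hCmax ▸ le_max_right _ _
  have hw0 : M' 0 < C 0 :=
    coord_lt_center (ci := C 0) (cj := C 1) (mi := M 0) (mj := M 1) hη hd0 hd1
      (by rw [hc0]; ring) (by rw [hc1]; ring) (norm_nonneg _)
      (by rw [hN, hc0, hc1]; ring) hC1 hp1 hmove2 (by ring_nf at hfar2 ⊢; exact hfar2)
  have hw1 : M' 1 < C 1 :=
    coord_lt_center (ci := C 1) (cj := C 0) (mi := M 1) (mj := M 0) hη hd1 hd0
      (by rw [hc1]; ring) (by rw [hc0]; ring) (norm_nonneg _)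
      (by rw [hN, hc0, hc1]; ring) hC0 hp0 (by linarith)
      (by ring_nf at hfar2 ⊢; linarith)
  have hW : 0 < (C 0 - M' 0) ^ 2 + (C 1 - M' 1) ^ 2 := by
    have := pow_pos (sub_pos.2 hw0) 2
    positivity
  have hdot : 0 < (C 0 - L 0) * (C 0 - M' 0) + (C 1 - L 1) * (C 1 - M' 1) := by
    have h0 : 0 < C 0 - L 0 := by rw [hc0]; simpa using mul_pos hη hd0
    have h1 : 0 < C 1 - L 1 := by rw [hc1]; simpa using mul_pos hη hd1
    exact add_pos (mul_pos h0 (sub_pos.2 hw0)) (mul_pos h1 (sub_pos.2 hw1))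
  have hspos : 0 < s := by
    by_contra! hs0
    -- `r` is the sum of the roots of the quadratic of which `s` is one, and `t` is the other root.
    obtain ⟨r, hr⟩ : ∃ r, r = 2 * ((C 0 - L 0) * (C 0 - M' 0) + (C 1 - L 1) * (C 1 - M' 1)) /
      ((C 0 - M' 0) ^ 2 + (C 1 - M' 1) ^ 2) := ⟨_, rfl⟩
    have hrpos : 0 < r := by rw [hr]; positivity
    rw [eq_div_iff hW.ne'] at hr
    obtain ⟨t, ht⟩ : ∃ t, t = r - s := ⟨_, rfl⟩
    have hu2 : ‖L' - L‖ ^ 2 = 1 := by rw [hunit]; norm_num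
    rw [norm_sq_pt, hs] at hu2
    simp at hu2
    have htunit : ‖C + t • (M' - C) - L‖ = 1 := by
      rw [← sq_eq_sq₀ (norm_nonneg _) zero_le_one, norm_sq_pt]
      simp
      rw [ht]
      linear_combination hu2 + (r - 2 * s) * hr
    have hle := hfarthest _ ⟨t, rfl⟩ htunit
    rw [hs, add_sub_cancel_left, add_sub_cancel_left, norm_smul, norm_smul] at hle
    have hMC : 0 < ‖M' - C‖ := by
      rw [norm_pos_iff, sub_ne_zero]
      rintro rfl
      exact lt_irrefl _ hw0
    have habs := le_of_mul_le_mul_right hle hMC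
    rw [Real.norm_eq_abs, Real.norm_eq_abs, abs_of_nonpos hs0] at habs
    linarith [le_abs_self t]
  have key : ∀ i, (C - L') i = s * (C i - M' i) := by
    intro i
    rw [hs]
    simp
    ring
  rw [key, key]
  exact ⟨mul_pos hspos (sub_pos.2 hw0), mul_pos hspos (sub_pos.2 hw1)⟩
end
end

section
/- Let L, M ∈ Q with both coordinates of L − M strictly positive, and let C be a center for (L, M) whose min-coordinate is at most 1. Then for every M' ∈ Q with ‖M' − M‖ ≤ 1 one has ‖M' − L‖ ≤ 1; consequently, a lion playing the Moving Center Lion Strategy captures the man in one move. -/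
/-!
Let `u = (a, b)` be the unit vector in the direction `L - M`, with `a, b > 0`, and let `r = ‖C - L‖`,
so that `C = L + r u` and `r` is the larger coordinate of `C`. The whole geometric content of the
hypotheses on `C` is the pair of bounds `L 0 ≤ b`, `L 1 ≤ a` (`coord_bounds`).

Suppose `M' ∈ Q` has `‖M' - M‖ ≤ 1 < ‖M' - L‖` and put `w = M' - L`. Since `M'` is closer to `M` than
to `L`, `w` makes an obtuse angle with `u`. But `M' ∈ Q` gives `w 0 ≥ -L 0 ≥ -b` and
`w 1 ≥ -L 1 ≥ -a`, and a vector with these bounds making an obtuse angle with `u` has norm at most `1`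
(`sq_add_sq_le_one`), a contradiction.
-/

noncomputable section

/-- The case of `coord_bounds` in which the first coordinate of the center is the larger one. -/
lemma coord_bounds_of_le {a b r x y : ℝ} (ha : 0 < a) (hb : 0 < b) (hab : a ^ 2 + b ^ 2 = 1)
    (hr : 0 < r) (hy : 0 ≤ y) (hx : x + r * a = r) (hyr : y + r * b ≤ r)
    (hy1 : y + r * b ≤ 1) : x ≤ b ∧ y ≤ a := by
  have ha1 : a < 1 := by nlinarith
  have hb1 : b < 1 := by nlinarith
  constructor
  · -- `x b = r b (1 - a) ≤ 1 - a ≤ 1 - a ^ 2 = b ^ 2`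
    have hrb : r * b ≤ 1 := by linarith
    have h1 : x * b ≤ b * b := by
      have h2 : x * b = (r * b) * (1 - a) := by
        rw [show x = r - r * a by linarith]; ring
      nlinarith [mul_le_mul_of_nonneg_right hrb (sub_nonneg.2 ha1.le)]
    exact le_of_mul_le_mul_right h1 hb
  · -- `y ≤ min r 1 - r b ≤ 1 - b ≤ a`
    have h1 : y ≤ 1 - b := by
      rcases le_total r 1 with h | h
      · nlinarith
      · nlinarith
    nlinarith

/-- If `(x, y)` lies in the positive quadrant, `(a, b)` is a unit vector with positive coordinates,
and `(x, y) + r (a, b)` has larger coordinate `r` and smaller coordinate at most `1`, then `x ≤ b`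
and `y ≤ a`. -/
lemma coord_bounds {a b r x y : ℝ} (ha : 0 < a) (hb : 0 < b) (hab : a ^ 2 + b ^ 2 = 1)
    (hr : 0 < r) (hx : 0 ≤ x) (hy : 0 ≤ y) (hmax : max (x + r * a) (y + r * b) = r)
    (hmin : min (x + r * a) (y + r * b) ≤ 1) : x ≤ b ∧ y ≤ a := by
  rcases le_total (y + r * b) (x + r * a) with h | h
  · rw [max_eq_left h] at hmax
    rw [min_eq_right h] at hmin
    exact coord_bounds_of_le ha hb hab hr hy hmax (h.trans hmax.le) hmin
  · rw [max_eq_right h] at hmax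
    rw [min_eq_left h] at hmin
    exact (coord_bounds_of_le hb ha (by linarith) hr hx hmax (h.trans hmax.le) hmin).symm

/-- A vector `(p, q)` making a non-acute angle with the unit vector `(a, b)` and with `p ≥ -b`,
`q ≥ -a` has norm at most `1`. -/
lemma sq_add_sq_le_one {a b p q : ℝ} (ha : 0 < a) (hb : 0 < b) (hab : a ^ 2 + b ^ 2 = 1)
    (hp : -b ≤ p) (hq : -a ≤ q) (hdot : p * a + q * b ≤ 0) : p ^ 2 + q ^ 2 ≤ 1 := by
  -- The non-acute angle bounds a positive coordinate: `p ≤ -q b / a ≤ b`, and likewise `q ≤ a`.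
  have hp' : p ≤ b := by
    have : p * a ≤ b * a := by nlinarith
    exact le_of_mul_le_mul_right this ha
  have hq' : q ≤ a := by
    have : q * b ≤ a * b := by nlinarith
    exact le_of_mul_le_mul_right this hb
  have h1 : p ^ 2 ≤ b ^ 2 := sq_le_sq' hp hp'
  have h2 : q ^ 2 ≤ a ^ 2 := sq_le_sq' hq hq'
  linarith

theorem stmt_5 (L M C : Pt) (hLQ : inQ L) (hMQ : inQ M)
    (hLM0 : 0 < (L - M) 0) (hLM1 : 0 < (L - M) 1)
    (hC : IsCenter C L M) (hm : minCoord C ≤ 1) :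
    ∀ M' : Pt, inQ M' → ‖M' - M‖ ≤ 1 → ‖M' - L‖ ≤ 1 := by
  obtain ⟨-, ⟨η, hη, rfl⟩, hnorm⟩ := hC
  intro M' hM' hM'M
  have hsq : ∀ P : Pt, ‖P‖ ^ 2 = P 0 ^ 2 + P 1 ^ 2 := fun P => by
    rw [EuclideanSpace.real_norm_sq_eq, Fin.sum_univ_two]
  by_contra! hlt
  have hd := hsq (L - M)
  set t := ‖L - M‖ with ht
  have ht0 : 0 < t := by
    rw [ht, norm_pos_iff]
    intro h
    simp [h] at hLM0
  rw [add_sub_cancel_left, norm_smul, Real.norm_of_nonneg hη.le, ← ht] at hnorm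
  have h1 : ‖M' - M‖ ^ 2 ≤ 1 := pow_le_one₀ (norm_nonneg _) hM'M
  have h2 : 1 < ‖M' - L‖ ^ 2 := one_lt_pow₀ hlt two_ne_zero
  rw [hsq] at h1 h2
  simp only [maxCoord, minCoord, PiLp.add_apply, PiLp.smul_apply, PiLp.sub_apply,
    smul_eq_mul] at *
  have hab : ((L 0 - M 0) / t) ^ 2 + ((L 1 - M 1) / t) ^ 2 = 1 := by
    field_simp
    exact hd.symm
  have e : ∀ z : ℝ, η * t * (z / t) = η * z := fun z => by field_simp
  obtain ⟨hL0, hL1⟩ := coord_bounds (x := L 0) (y := L 1) (div_pos hLM0 ht0) (div_pos hLM1 ht0) hab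
    (mul_pos hη ht0) hLQ.1 hLQ.2 (by rw [e, e]; exact hnorm.symm) (by rw [e, e]; exact hm)
  have hdot : (M' 0 - L 0) * ((L 0 - M 0) / t) + (M' 1 - L 1) * ((L 1 - M 1) / t) ≤ 0 := by
    rw [← mul_div_assoc, ← mul_div_assoc, ← add_div]
    refine div_nonpos_of_nonpos_of_nonneg ?_ ht0.le
    -- `2 ⟪w, d⟫ = ‖w + d‖ ^ 2 - ‖w‖ ^ 2 - ‖d‖ ^ 2` with `w = M' - L` and `d = L - M`
    nlinarith [sq_nonneg (L 0 - M 0), sq_nonneg (L 1 - M 1)]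
  have := sq_add_sq_le_one (div_pos hLM0 ht0) (div_pos hLM1 ht0) hab
    (p := M' 0 - L 0) (q := M' 1 - L 1) (by linarith [hM'.1]) (by linarith [hM'.2]) hdot
  linarith
end
end

section
/- In the one-step setup of the Moving Center Lion Strategy with C' a center for (L', M'), the new center C' lies on the line through the old center C and the new lion position L'; more precisely, C' = C + α·(C − L') for some real number α < 0. -/
/-!
Put the lion `L` at the origin, write `d = L - M`, `w = M' - L`, so that `C = η d`, and let
`L' = C + s (M' - C)`.

* The man ends up on the far side of the line `ℓ` through `L` orthogonal to `d`, and at distance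
  at most `1` from the axis `ℝ d`. Hence the segment from `C` to `M'` crosses `ℓ` strictly inside
  the unit circle around `L`, and the farther intersection `L'` of the line with this circle lies
  beyond `ℓ`. Therefore `0 < s`, the angle at `L` between `C` and `L'` is obtuse, and
  `‖C - L‖ < ‖C - L'‖` (`lion_advances`).
* Since `s > 0`, `C' = C + α (C - L')` for some real `α`. If `0 ≤ α`, then, `maxCoord` being
  `1`-Lipschitz, `(1 + α) ‖C - L'‖ = ‖C' - L'‖ = maxCoord C' ≤ maxCoord C + α ‖C - L'‖`,
  so `‖C - L'‖ ≤ maxCoord C = ‖C - L‖`, a contradiction.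
-/

noncomputable section

/-- The scalar form of `lion_advances`, with `D = ‖d‖²`, `W = ‖w‖²`, `x = ⟪w, d⟫`; the polynomial
in `hs` is `‖η d + s (w - η d)‖²`. The conclusion `η * D + s * (x - η * D) < 0` says that the new
lion position has negative inner product with `d`. -/
lemma lion_advances_scalar {D W x η s : ℝ} (hD : 0 < D) (hη : 0 < η) (hW : 1 < W)
    (hwd : W + 2 * x + D ≤ 1) (hV : 0 < W - 2 * η * x + η ^ 2 * D)
    (hs : η ^ 2 * D + 2 * s * (η * (x - η * D)) + s ^ 2 * (W - 2 * η * x + η ^ 2 * D) = 1)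
    (hfar : ∀ t : ℝ,
      η ^ 2 * D + 2 * t * (η * (x - η * D)) + t ^ 2 * (W - 2 * η * x + η ^ 2 * D) = 1 →
        |t| ≤ |s|) :
    0 < s ∧ η * D + s * (x - η * D) < 0 := by
  set V := W - 2 * η * x + η ^ 2 * D with hVdef
  have hx : x < 0 := by linarith
  have hηD : 0 < η * D := mul_pos hη hD
  have hy : 0 < η * D - x := by linarith
  -- the parameter at which the line crosses the orthogonal complement of `d`
  obtain ⟨s₀, hs₀⟩ : ∃ s₀, s₀ = η * D / (η * D - x) := ⟨_, rfl⟩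
  have hs₀e : s₀ * (η * D - x) = η * D := by rw [hs₀]; field_simp
  have hs₀pos : 0 < s₀ := by rw [hs₀]; positivity
  have hs₀lt : s₀ < 1 := by rw [hs₀, div_lt_one hy]; linarith
  -- that crossing point is strictly inside the unit circle
  have hin : η ^ 2 * D + 2 * s₀ * (η * (x - η * D)) + s₀ ^ 2 * V < 1 := by
    have e : (η ^ 2 * D + 2 * s₀ * (η * (x - η * D)) + s₀ ^ 2 * V) * D
        = s₀ ^ 2 * (W * D - x ^ 2) := by
      rw [hVdef]
      linear_combination (s₀ * (η * D - x) - η * D) * hs₀e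
    have h1 : W * D - x ^ 2 ≤ D := by nlinarith [sq_nonneg (x + D)]
    have h2 : s₀ ^ 2 < 1 := by nlinarith
    have h3 : s₀ ^ 2 * (W * D - x ^ 2) < 1 * D := by
      nlinarith [mul_le_mul_of_nonneg_left h1 (sq_nonneg s₀)]
    rw [← e] at h3
    exact lt_of_mul_lt_mul_right h3 hD.le
  -- the second root, by Vieta
  obtain ⟨t, ht⟩ : ∃ t, t = 2 * (η * (η * D - x)) / V - s := ⟨_, rfl⟩
  have hsum : (s + t) * V = 2 * (η * (η * D - x)) := by rw [ht]; field_simp; ring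
  have htr : η ^ 2 * D + 2 * t * (η * (x - η * D)) + t ^ 2 * V = 1 := by
    linear_combination hs + (t - s) * hsum
  have hst := hfar t htr
  have hpos : 0 < s + t := by
    have : 0 < (s + t) * V := by rw [hsum]; positivity
    exact pos_of_mul_pos_left this hV.le
  have hts : t ≤ s := by
    have := sq_le_sq.mpr hst
    nlinarith
  have hspos : 0 < s := by linarith
  have hprod : (s₀ - s) * (s₀ - t) < 0 := by
    have e : ((s₀ - s) * (s₀ - t)) * V
        = (η ^ 2 * D + 2 * s₀ * (η * (x - η * D)) + s₀ ^ 2 * V) - 1 := by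
      linear_combination (s - s₀) * hsum - hs
    by_contra hc
    have := mul_nonneg (not_lt.mp hc) hV.le
    linarith
  have hs₀s : s₀ < s := by
    by_contra hc
    have := mul_nonneg (sub_nonneg.mpr (not_lt.mp hc))
      (sub_nonneg.mpr (hts.trans (not_lt.mp hc)))
    linarith
  exact ⟨hspos, by nlinarith⟩

/-- In a frame with the old lion at the origin, `η • d` is the old center, `w` the new position of
the man, and `η • d + s • (w - η • d)` the new position of the lion: the lion moves from the center
towards the man, to a point strictly farther from the center than the old one. -/
lemma lion_advances {E : Type*} [NormedAddCommGroup E] [InnerProductSpace ℝ E] {d w : E}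
    {η s : ℝ} (hd : d ≠ 0) (hη : 0 < η) (hwd : ‖w + d‖ ≤ 1) (hw : 1 < ‖w‖)
    (hs : ‖η • d + s • (w - η • d)‖ = 1)
    (hfar : ∀ t : ℝ, ‖η • d + t • (w - η • d)‖ = 1 →
      ‖t • (w - η • d)‖ ≤ ‖s • (w - η • d)‖) :
    0 < s ∧ ‖η • d‖ < ‖s • (w - η • d)‖ := by
  have hD : 0 < ‖d‖ ^ 2 := by positivity
  have hW : 1 < ‖w‖ ^ 2 := by nlinarith
  have hwd2 : ‖w‖ ^ 2 + 2 * inner ℝ w d + ‖d‖ ^ 2 ≤ 1 := by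
    rw [← norm_add_sq_real]
    nlinarith [norm_nonneg (w + d)]
  have hVe : ‖w - η • d‖ ^ 2 = ‖w‖ ^ 2 - 2 * η * inner ℝ w d + η ^ 2 * ‖d‖ ^ 2 := by
    rw [norm_sub_sq_real, inner_smul_right, norm_smul, mul_pow, Real.norm_eq_abs, sq_abs]
    ring
  have hηd : ‖η • d‖ ^ 2 = η ^ 2 * ‖d‖ ^ 2 := by
    rw [norm_smul, mul_pow, Real.norm_eq_abs, sq_abs]
  have hq : ∀ t : ℝ, ‖η • d + t • (w - η • d)‖ ^ 2 = η ^ 2 * ‖d‖ ^ 2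
      + 2 * t * (η * (inner ℝ w d - η * ‖d‖ ^ 2)) + t ^ 2 * ‖w - η • d‖ ^ 2 := by
    intro t
    rw [norm_add_sq_real, hηd, norm_smul t, mul_pow, Real.norm_eq_abs, sq_abs, inner_smul_left,
      inner_smul_right, inner_sub_right, inner_smul_right, real_inner_self_eq_norm_sq,
      real_inner_comm]
    simp only [conj_trivial]
    ring
  have hx : inner ℝ w d < 0 := by linarith
  have hVpos : 0 < ‖w - η • d‖ ^ 2 := by
    rw [hVe]; nlinarith [mul_pos hη (neg_pos.mpr hx), mul_pos (pow_pos hη 2) hD]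
  have hvpos : 0 < ‖w - η • d‖ := by
    by_contra hc
    have : ‖w - η • d‖ = 0 := le_antisymm (not_lt.mp hc) (norm_nonneg _)
    rw [this] at hVpos
    simp at hVpos
  obtain ⟨hspos, hneg⟩ := lion_advances_scalar (s := s) hD hη hW hwd2 (hVe ▸ hVpos)
    (by rw [← hVe, ← hq, hs, one_pow]) (by
      intro t ht
      rw [← hVe, ← hq] at ht
      have h1 : ‖η • d + t • (w - η • d)‖ = 1 := by
        exact (pow_eq_one_iff_of_nonneg (norm_nonneg _) two_ne_zero).mp ht
      have h2 := hfar t h1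
      rw [norm_smul, norm_smul, Real.norm_eq_abs, Real.norm_eq_abs] at h2
      exact le_of_mul_le_mul_right h2 hvpos)
  refine ⟨hspos, ?_⟩
  have h1 := hq s
  rw [hs] at h1
  refine lt_of_pow_lt_pow_left₀ 2 (norm_nonneg _) ?_
  rw [hηd, norm_smul, mul_pow, Real.norm_eq_abs, sq_abs]
  -- law of cosines in the triangle with vertices the old lion, the center and the new lion
  nlinarith [mul_pos hη (neg_pos.mpr hneg)]

lemma maxCoord_add_le (P R : Pt) : maxCoord (P + R) ≤ maxCoord P + ‖R‖ := by
  have h : ∀ i, (P + R) i ≤ P i + ‖R‖ := fun i => by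
    have := (le_abs_self (R i)).trans (PiLp.norm_apply_le R i)
    simpa using this
  exact max_le ((h 0).trans (by gcongr; exact le_max_left _ _))
    ((h 1).trans (by gcongr; exact le_max_right _ _))

theorem stmt_7 (L M C M' L' C' : Pt) (h : MCLSStep L M C M' L')
    (hC' : IsCenter C' L' M') :
    ∃ α : ℝ, α < 0 ∧ C' = C + α • (C - L') := by
  obtain ⟨-, ⟨η, hη, hCη⟩, hCn⟩ := h.hC
  obtain ⟨-, ⟨η', hη', hCη'⟩, hCn'⟩ := hC'
  obtain ⟨s, hs⟩ := h.hline
  have hd : L - M ≠ 0 := by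
    intro h0
    have := h.hLM0
    rw [h0] at this
    simp at this
  have hv : M' - L - η • (L - M) = M' - C := by rw [hCη]; abel
  have hCL : η • (L - M) = C - L := by rw [hCη]; abel
  have hpt : ∀ t : ℝ, η • (L - M) + t • (M' - L - η • (L - M)) = C + t • (M' - C) - L := by
    intro t; rw [hv, hCL]; abel
  obtain ⟨hspos, hlt⟩ := lion_advances (d := L - M) (w := M' - L) (s := s) hd hη
    (by simpa using h.hM'move) h.hM'far (by rw [hpt, ← hs]; exact h.hunit) (by
      intro t ht
      rw [hpt] at ht
      have := h.hfarthest _ ⟨t, rfl⟩ ht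
      rw [hs] at this
      simpa [hv] using this)
  rw [hv, hCL, hCn] at hlt
  have hCL' : C - L' = -(s • (M' - C)) := by rw [hs]; abel
  rw [← norm_neg, ← hCL'] at hlt
  have hα : C' = C + (η' * (1 - s) / s - 1) • (C - L') := by
    have : (η' * (1 - s) / s - 1) * s = η' * (1 - s) - s := by field_simp
    rw [hCL', ← smul_neg, smul_smul, this, hCη', hs]
    module
  refine ⟨_, ?_, hα⟩
  generalize η' * (1 - s) / s - 1 = α at hα
  by_contra hc
  have hα0 : 0 ≤ α := not_lt.mp hc
  have h1 : C' - L' = (1 + α) • (C - L') := by rw [hα]; module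
  have h2 := maxCoord_add_le C (α • (C - L'))
  rw [← hα, ← hCn', h1, norm_smul, norm_smul, Real.norm_of_nonneg hα0,
    Real.norm_of_nonneg (by linarith)] at h2
  linarith
end
end

section
/- For all real numbers m > 0, β ≥ 1 and γ > 1, one has max{ m·(β − √(β²γ² − 1))/(βγ − √(β²γ² − 1)), m·(1 − β·√(γ² − 1))/(γ − √(γ² − 1)) } ≤ m·(1 − √(γ² − 1))/(γ − √(γ² − 1)). (Equivalently: with r = β·m and r̃ = γ·r, the bound of the previous lemma, viewed as a function of r ≥ m, is maximized at r = m, where it equals m·(m − √(r̃² − m²))/(r̃ − √(r̃² − m²)).) -/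
/-!
Write `s = √(γ² - 1)` and `t = √(β²γ² - 1)`. The bound on the second entry of the maximum is
immediate from `β ≥ 1`. For the first, clearing the positive denominators and cancelling leaves
`β s (γ - 1) ≤ t (γ - 1)`, that is `β s ≤ t`, and squaring turns this into `1 ≤ β²`.
-/

theorem stmt_11 (m β γ : ℝ) (hm : 0 < m) (hβ : 1 ≤ β) (hγ : 1 < γ) :
    max (m * (β - Real.sqrt (β ^ 2 * γ ^ 2 - 1)) / (β * γ - Real.sqrt (β ^ 2 * γ ^ 2 - 1)))
        (m * (1 - β * Real.sqrt (γ ^ 2 - 1)) / (γ - Real.sqrt (γ ^ 2 - 1))) ≤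
      m * (1 - Real.sqrt (γ ^ 2 - 1)) / (γ - Real.sqrt (γ ^ 2 - 1)) := by
  have hs0 : 0 ≤ Real.sqrt (γ ^ 2 - 1) := Real.sqrt_nonneg _
  have hs : Real.sqrt (γ ^ 2 - 1) < γ := by
    rw [Real.sqrt_lt' (by linarith)]
    linarith
  have ht : Real.sqrt (β ^ 2 * γ ^ 2 - 1) < β * γ := by
    rw [Real.sqrt_lt' (by positivity), mul_pow]
    linarith
  have hst : β * Real.sqrt (γ ^ 2 - 1) ≤ Real.sqrt (β ^ 2 * γ ^ 2 - 1) := by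
    apply Real.le_sqrt_of_sq_le
    rw [mul_pow, Real.sq_sqrt (by nlinarith)]
    nlinarith
  generalize Real.sqrt (γ ^ 2 - 1) = s at *
  generalize Real.sqrt (β ^ 2 * γ ^ 2 - 1) = t at *
  have hs' : 0 < γ - s := sub_pos.2 hs
  have ht' : 0 < β * γ - t := sub_pos.2 ht
  apply max_le
  · rw [mul_div_assoc, mul_div_assoc]
    refine mul_le_mul_of_nonneg_left ?_ hm.le
    rw [div_le_div_iff₀ ht' hs']
    nlinarith [mul_le_mul_of_nonneg_right hst (sub_pos.2 hγ).le]
  · have : s ≤ β * s := le_mul_of_one_le_left hs0 hβ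
    gcongr
end

section
/- For all real numbers m > 0 and γ > 1, the function β ↦ m·(β − √(β²γ² − 1))/(βγ − √(β²γ² − 1)) is strictly decreasing on the interval [1, ∞). -/
/-!
Rationalizing the denominator with `(βγ - s)(βγ + s) = 1`, where `s = √(β²γ² - 1)`, rewrites the
function as `m (1 - (γ - 1) β (βγ + s))` (`quotient_eq`). For `β ≥ 1` both `β` and `βγ + s` are
positive and strictly increasing, hence so is their product, and the function strictly decreases
because `m > 0` and `γ - 1 > 0`.
-/

/-- The rationalized form of the quotient, in which the dependence on `β` is monotone term by
term. -/
lemma quotient_eq (m γ β : ℝ) (hγ : 1 < γ) (hβ : 1 ≤ β) :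
    m * (β - Real.sqrt (β ^ 2 * γ ^ 2 - 1)) / (β * γ - Real.sqrt (β ^ 2 * γ ^ 2 - 1)) =
      m * (1 - (γ - 1) * (β * (β * γ + Real.sqrt (β ^ 2 * γ ^ 2 - 1)))) := by
  have hx : 1 < β * γ := by nlinarith
  have hs : Real.sqrt (β ^ 2 * γ ^ 2 - 1) ^ 2 = β ^ 2 * γ ^ 2 - 1 :=
    Real.sq_sqrt (by nlinarith)
  set s := Real.sqrt (β ^ 2 * γ ^ 2 - 1)
  have h1 : (β * γ - s) * (β * γ + s) = 1 := by linear_combination -hs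
  have h0 : β * γ - s ≠ 0 := left_ne_zero_of_mul_eq_one h1
  rw [div_eq_iff h0]
  linear_combination m * (γ - 1) * β * h1

theorem stmt_12 (m γ : ℝ) (hm : 0 < m) (hγ : 1 < γ) :
    StrictAntiOn
      (fun β : ℝ =>
        m * (β - Real.sqrt (β ^ 2 * γ ^ 2 - 1)) / (β * γ - Real.sqrt (β ^ 2 * γ ^ 2 - 1)))
      (Set.Ici 1) := by
  intro a ha b hb hab
  have ha1 : (1 : ℝ) ≤ a := ha
  have hb1 : (1 : ℝ) ≤ b := hb
  simp only [quotient_eq m γ a hγ ha1, quotient_eq m γ b hγ hb1]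
  have ha0 : 0 < a := by linarith
  have hγ0 : 0 < γ := by linarith
  have hs : Real.sqrt (a ^ 2 * γ ^ 2 - 1) ≤ Real.sqrt (b ^ 2 * γ ^ 2 - 1) := by
    apply Real.sqrt_le_sqrt
    gcongr
  have hsum : a * γ + Real.sqrt (a ^ 2 * γ ^ 2 - 1) < b * γ + Real.sqrt (b ^ 2 * γ ^ 2 - 1) :=
    add_lt_add_of_lt_of_le (mul_lt_mul_of_pos_right hab hγ0) hs
  have hprod : a * (a * γ + Real.sqrt (a ^ 2 * γ ^ 2 - 1)) <
      b * (b * γ + Real.sqrt (b ^ 2 * γ ^ 2 - 1)) :=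
    mul_lt_mul'' hab hsum ha0.le (by positivity)
  have hγ1 : 0 < γ - 1 := by linarith
  exact mul_lt_mul_of_pos_left (sub_lt_sub_left (mul_lt_mul_of_pos_left hprod hγ1) 1) hm
end

section
/- For all real numbers m > 1 and r̃ ≥ √(m² + 1), one has m·(m − √(r̃² − m²))/(r̃ − √(r̃² − m²)) ≤ m·(m − 1)/(√(m² + 1) − 1). -/
/-!
Put `s = √(rt² - m²) ≥ 1` and `R = √(m² + 1)`. Since `(rt - s)(rt + s) = m² = (R - 1)(R + 1)`,
rationalizing the denominators reduces the claim to `(m - s)(rt + s) ≤ (m - 1)(R + 1)`, where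
`rt² - R² = s² - 1`. The difference of the two sides equals
`(s - 1)(R + s + 1 - m) - (rt - R)(m - s)`, and it is nonnegative because
`(rt - R)(m - s) ≤ (rt - R)(rt + R) = (s - 1)(s + 1) ≤ (s - 1)(R + s + 1 - m)`.
-/

theorem stmt_15 (m rt : ℝ) (hm : 1 < m) (hrt : Real.sqrt (m ^ 2 + 1) ≤ rt) :
    m * (m - Real.sqrt (rt ^ 2 - m ^ 2)) / (rt - Real.sqrt (rt ^ 2 - m ^ 2)) ≤
      m * (m - 1) / (Real.sqrt (m ^ 2 + 1) - 1) := by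
  have hR2 : Real.sqrt (m ^ 2 + 1) ^ 2 = m ^ 2 + 1 := Real.sq_sqrt (by positivity)
  have hRm : m ≤ Real.sqrt (m ^ 2 + 1) := Real.le_sqrt_of_sq_le (by linarith)
  generalize Real.sqrt (m ^ 2 + 1) = R at *
  have hr : m ^ 2 + 1 ≤ rt ^ 2 := by nlinarith
  have hs2 : Real.sqrt (rt ^ 2 - m ^ 2) ^ 2 = rt ^ 2 - m ^ 2 := Real.sq_sqrt (by linarith)
  have hs1 : 1 ≤ Real.sqrt (rt ^ 2 - m ^ 2) := Real.le_sqrt_of_sq_le (by linarith)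
  generalize Real.sqrt (rt ^ 2 - m ^ 2) = s at *
  have hrs : 0 < rt - s := by nlinarith
  have hR1 : 0 < R - 1 := by linarith
  have hm0 : m ≠ 0 := by linarith
  have e1 : m * (m - s) / (rt - s) = (m - s) * (rt + s) / m := by
    rw [div_eq_div_iff hrs.ne' hm0]
    linear_combination (m - s) * hs2
  have e2 : m * (m - 1) / (R - 1) = (m - 1) * (R + 1) / m := by
    rw [div_eq_div_iff hR1.ne' hm0]
    linear_combination -(m - 1) * hR2
  rw [e1, e2]
  refine div_le_div_of_nonneg_right ?_ (by linarith)
  have h1 : (rt - R) * (m - s) ≤ (rt - R) * (rt + R) :=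
    mul_le_mul_of_nonneg_left (by linarith) (by linarith)
  have h2 : (s - 1) * (s + 1) ≤ (s - 1) * (R + s + 1 - m) :=
    mul_le_mul_of_nonneg_left (by linarith) (by linarith)
  linarith
end

section
/- The function g defined by g(b) = b·(b − 1)/(√(1 + b²) − 1) is strictly increasing on the interval [1, ∞). -/
/-!
Since `(√(1 + b²) - 1) (√(1 + b²) + 1) = b²`, the function equals `(1 - 1 / b) (√(1 + b²) + 1)`
for `b ≥ 1` (`g_eq_mul`). The first factor is nonnegative and strictly increasing, the second is
positive and increasing, so the product is strictly increasing.
-/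

/-- Rationalizing the denominator writes the function as a product of two nonnegative increasing
factors. -/
lemma g_eq_mul {b : ℝ} (hb : 1 ≤ b) :
    b * (b - 1) / (Real.sqrt (1 + b ^ 2) - 1) = (1 - 1 / b) * (Real.sqrt (1 + b ^ 2) + 1) := by
  have hs : Real.sqrt (1 + b ^ 2) ^ 2 = 1 + b ^ 2 := Real.sq_sqrt (by positivity)
  have h1 : 1 < Real.sqrt (1 + b ^ 2) := Real.lt_sqrt_of_sq_lt (by nlinarith)
  have h2 : Real.sqrt (1 + b ^ 2) - 1 ≠ 0 := by linarith
  have h3 : b ≠ 0 := by linarith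
  rw [div_eq_iff h2, mul_assoc,
    show (Real.sqrt (1 + b ^ 2) + 1) * (Real.sqrt (1 + b ^ 2) - 1) = b ^ 2 by linarith]
  field_simp

theorem stmt_16 :
    StrictMonoOn (fun b : ℝ => b * (b - 1) / (Real.sqrt (1 + b ^ 2) - 1)) (Set.Ici 1) := by
  intro a ha b hb hab
  have ha1 : (1 : ℝ) ≤ a := ha
  have hb1 : (1 : ℝ) ≤ b := hb
  simp only [g_eq_mul ha1, g_eq_mul hb1]
  have h1 : 1 / b < 1 / a := one_div_lt_one_div_of_lt (by linarith) hab
  have h2 : 1 / a ≤ 1 := (div_le_one (by linarith)).2 ha1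
  have h3 : Real.sqrt (1 + a ^ 2) ≤ Real.sqrt (1 + b ^ 2) := Real.sqrt_le_sqrt (by nlinarith)
  exact mul_lt_mul (by linarith) (by linarith) (by positivity) (by linarith)
end

section
/- For every real number b > 1, one has ( b·(b − 1)/(√(1 + b²) − 1) )² < b² − 1. -/
theorem stmt_17 (b : ℝ) (hb : 1 < b) :
    (b * (b - 1) / (Real.sqrt (1 + b ^ 2) - 1)) ^ 2 < b ^ 2 - 1 := by
  have hs : Real.sqrt (1 + b ^ 2) ^ 2 = 1 + b ^ 2 := Real.sq_sqrt (by positivity)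
  have hbs : b < Real.sqrt (1 + b ^ 2) := Real.lt_sqrt_of_sq_lt (by linarith)
  generalize Real.sqrt (1 + b ^ 2) = s at hs hbs ⊢
  have hs1 : 0 < s - 1 := by linarith
  rw [div_pow, div_lt_iff₀ (pow_pos hs1 2)]
  -- Since `b ^ 2 = (s - 1) * (s + 1)`, the right side minus the left side factors as
  -- `(b - 1) * (s - 1) * ((b + 1) * (s - 1) - (b - 1) * (s + 1))`,
  -- whose last factor is `2 * (s - b)`.
  have key : 0 < (b - 1) * (s - 1) * (2 * (s - b)) :=
    mul_pos (mul_pos (by linarith) hs1) (by linarith)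
  linear_combination key - (b - 1) ^ 2 * hs
end

section
/- Let m₀ > 1 be a real number and define the sequence b : ℕ → ℝ by b 0 = m₀ and b (t+1) = b t·(b t − 1)/(√(1 + (b t)²) − 1). Then there exists t ≤ ⌈m₀²⌉ − 1 with b t ≤ 1. (In particular, the upper bound on the number of moves of the Moving Center Lion Strategy is at most Sgall's bound ⌈m₀²⌉ for the Fixed Center Lion Strategy.) -/
/-!
The square `b t ^ 2` drops by at least `1` at every step taken from a value `b t > 1`
(`sq_step_le`). Hence, if `b t > 1` held for all `t ≤ n` with `n = ⌈m₀ ^ 2⌉ - 1`, then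
`b n ^ 2 ≤ m₀ ^ 2 - n ≤ 1`, contradicting `b n > 1`.

For the drop, rationalize the step as `(x - 1) * (√(1 + x ^ 2) + 1) / x` and use
`√(1 + x ^ 2) ≤ x + 1 / (2 * x)`.
-/

/-- One step of the recursion from `x > 1` lowers the square by at least `1`. With
`√(1 + x ^ 2) ≤ x + 1 / (2 * x)` the step is at most `x - (x + 1) / (2 * x ^ 2)`, and the
square of the latter is at most `x ^ 2 - 1` because `(x + 1) ^ 2 ≤ 4 * x ^ 3`. -/
lemma sq_step_le {x : ℝ} (hx : 1 < x) :
    (x * (x - 1) / (Real.sqrt (1 + x ^ 2) - 1)) ^ 2 ≤ x ^ 2 - 1 := by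
  have hx0 : 0 < x := by linarith
  have hs2 : Real.sqrt (1 + x ^ 2) ^ 2 = 1 + x ^ 2 := Real.sq_sqrt (by positivity)
  have hs1 : 1 < Real.sqrt (1 + x ^ 2) := by
    rw [Real.lt_sqrt (by norm_num)]
    nlinarith
  have hsu : Real.sqrt (1 + x ^ 2) ≤ x + 1 / (2 * x) := by
    apply Real.sqrt_le_iff.2 ⟨by positivity, ?_⟩
    have h : (x + 1 / (2 * x)) ^ 2 = 1 + x ^ 2 + (1 / (2 * x)) ^ 2 := by
      field_simp
      ring
    rw [h]
    linarith [sq_nonneg (1 / (2 * x))]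
  set s := Real.sqrt (1 + x ^ 2)
  have hrat : x * (x - 1) / (s - 1) = (x - 1) * (s + 1) / x := by
    rw [div_eq_div_iff (by linarith) hx0.ne']
    linear_combination (1 - x) * hs2
  have hle : (x - 1) * (s + 1) / x ≤ x - (x + 1) / (2 * x ^ 2) := by
    have h : x - (x + 1) / (2 * x ^ 2) = (x - 1) * (x + 1 / (2 * x) + 1) / x := by
      field_simp
      ring
    rw [h]
    gcongr
  have hnn : 0 ≤ (x - 1) * (s + 1) / x :=
    div_nonneg (mul_nonneg (by linarith) (by linarith)) hx0.le
  rw [hrat]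
  refine (pow_le_pow_left₀ hnn hle 2).trans ?_
  have h : x ^ 2 - 1 - (x - (x + 1) / (2 * x ^ 2)) ^ 2
      = (4 * x ^ 3 - (x + 1) ^ 2) / (4 * x ^ 4) := by
    field_simp
    ring
  have hpoly : 0 ≤ 4 * x ^ 3 - (x + 1) ^ 2 := by
    nlinarith [mul_pos hx0 hx0, mul_pos (mul_pos hx0 hx0) (sub_pos.2 hx)]
  have : 0 ≤ (4 * x ^ 3 - (x + 1) ^ 2) / (4 * x ^ 4) := by positivity
  linarith

theorem stmt_18 (m₀ : ℝ) (hm : 1 < m₀) (b : ℕ → ℝ)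
    (hb0 : b 0 = m₀)
    (hbrec : ∀ t : ℕ, b (t + 1) = b t * (b t - 1) / (Real.sqrt (1 + b t ^ 2) - 1)) :
    ∃ t : ℕ, (t : ℤ) ≤ ⌈m₀ ^ 2⌉ - 1 ∧ b t ≤ 1 := by
  by_contra! hgt
  have hceil : 0 ≤ ⌈m₀ ^ 2⌉ - 1 := by
    have : 0 < ⌈m₀ ^ 2⌉ := Int.ceil_pos.2 (by positivity)
    omega
  obtain ⟨n, hn⟩ := Int.eq_ofNat_of_zero_le hceil
  have hdrop : ∀ t : ℕ, t ≤ n → b t ^ 2 ≤ m₀ ^ 2 - t := by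
    intro t
    induction t with
    | zero => simp [hb0]
    | succ t ih =>
      intro ht
      have hstep := sq_step_le (hgt t (by omega))
      rw [← hbrec t] at hstep
      have := ih (by omega)
      push_cast
      linarith
  have hlast := hdrop n le_rfl
  have hbn := hgt n (by omega)
  have hcast : (⌈m₀ ^ 2⌉ : ℝ) = n + 1 := by
    have : ⌈m₀ ^ 2⌉ = (n : ℤ) + 1 := by omega
    exact_mod_cast this
  have := Int.le_ceil (m₀ ^ 2)
  nlinarith
end
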